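/- Let (a_j)_{j≥1} and (b_j)_{j≥1} be sequences of vectors in ℤ³, a_j = (a_{j,0}, a_{j,1}, a_{j,2}) and b_j = (b_{j,0}, b_{j,1}, b_{j,2}), all but finitely many equal to zero (or with absolutely summable products), such that a_{j,0}+a_{j,1}+a_{j,2} = 0 and b_{j,0}+b_{j,1}+b_{j,2} = 0 for all j, and such that Σ_j a_{j,0} b_{j,0} = Σ_j a_{j,1} b_{j,1} = Σ_j a_{j,2} b_{j,2} = 1 and Σ_j a_{j,0} b_{j,1} = Σ_j a_{j,1} b_{j,2} = Σ_j a_{j,2} b_{j,0} = −1. Then Σ_j ‖a_j‖₁ ‖b_j‖₁ ≥ 8. -/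

import Mathlib

/-!
`∑ j, ‖a j‖₁ ‖b j‖₁` bounds the entrywise ℓ¹-norm of the matrix `∑ j, a j ⊗ b j`, of which the
hypotheses prescribe six entries `± 1`; hence it is at least `6`. Since a vector of integers with
sum zero has even ℓ¹-norm, it is also a multiple of `4`, and the next multiple of `4` is `8`.
-/

theorem even_sum_abs {κ : Type*} {s : Finset κ} {v : κ → ℤ} :
    Even (∑ i ∈ s, |v i|) ↔ Even (∑ i ∈ s, v i) := by
  have hdiff : Even (∑ i ∈ s, |v i| - ∑ i ∈ s, v i) := by
    rw [← Finset.sum_sub_distrib]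
    refine Finset.even_sum _ fun i _ => ?_
    rw [Int.even_sub, even_abs]
  exact Int.even_sub.1 hdiff

section

variable {ι κ κ' : Type*} [Fintype κ] [Fintype κ']

theorem sum_norm_tsum_le_tsum_of_sum_norm_le {E : Type*} [SeminormedAddCommGroup E]
    {F : ι → κ → E} {N : ι → ℝ} (hN : Summable N) (hF : ∀ j, ∑ i, ‖F j i‖ ≤ N j) :
    ∑ i, ‖∑' j, F j i‖ ≤ ∑' j, N j := by
  have hnorm (i : κ) : Summable fun j => ‖F j i‖ :=
    hN.of_nonneg_of_le (fun _ => norm_nonneg _) fun j =>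
      (Finset.single_le_sum (fun _ _ => norm_nonneg _) (Finset.mem_univ i)).trans (hF j)
  calc ∑ i, ‖∑' j, F j i‖
      ≤ ∑ i, ∑' j, ‖F j i‖ := Finset.sum_le_sum fun i _ => norm_tsum_le_tsum_norm (hnorm i)
    _ = ∑' j, ∑ i, ‖F j i‖ := (Summable.tsum_finsetSum fun i _ => hnorm i).symm
    _ ≤ ∑' j, N j := (summable_sum fun i _ => hnorm i).tsum_le_tsum hF hN

theorem sum_norm_tsum_mul_le {R : Type*} [NonUnitalSeminormedRing R]
    {f : ι → κ → R} {g : ι → κ' → R} (h : Summable fun j => (∑ i, ‖f j i‖) * ∑ k, ‖g j k‖) :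
    ∑ i, ∑ k, ‖∑' j, f j i * g j k‖ ≤ ∑' j, (∑ i, ‖f j i‖) * ∑ k, ‖g j k‖ := by
  rw [← Fintype.sum_prod_type' fun i k => ‖∑' j, f j i * g j k‖]
  refine sum_norm_tsum_le_tsum_of_sum_norm_le (F := fun j (p : κ × κ') => f j p.1 * g j p.2) h
    fun j => ?_
  rw [Fintype.sum_mul_sum, ← Fintype.sum_prod_type' fun i k => ‖f j i‖ * ‖g j k‖]
  exact Finset.sum_le_sum fun p _ => norm_mul_le _ _

theorem exists_tsum_intCast_eq_mul {f : ι → ℤ} {m : ℤ} (hf : ∀ j, m ∣ f j) :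
    ∃ n : ℤ, ∑' j, (f j : ℝ) = m * n := by
  have hmem : ∑' j, (f j : ℝ) ∈ AddSubgroup.zmultiples (m : ℝ) := by
    refine tsum_mem AddSubgroup.isClosed_of_discrete fun j => ?_
    obtain ⟨c, hc⟩ := hf j
    exact AddSubgroup.mem_zmultiples_iff.2 ⟨c, by rw [hc]; simp [mul_comm]⟩
  obtain ⟨n, hn⟩ := AddSubgroup.mem_zmultiples_iff.1 hmem
  exact ⟨n, by rw [← hn, zsmul_eq_mul, mul_comm]⟩

theorem statement6_general {a : ι → κ → ℤ} {b : ι → κ' → ℤ} {m : ℤ}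
    (ha : ∀ j, Even (∑ i, a j i)) (hb : ∀ j, Even (∑ k, b j k))
    (hsum : Summable fun j => ((∑ i, |a j i| : ℤ) : ℝ) * ((∑ k, |b j k| : ℤ) : ℝ))
    (hm : 4 * (m : ℝ) < ∑ i, ∑ k, |∑' j, ((a j i * b j k : ℤ) : ℝ)|) :
    4 * ((m : ℝ) + 1) ≤ ∑' j, ((∑ i, |a j i| : ℤ) : ℝ) * ((∑ k, |b j k| : ℤ) : ℝ) := by
  have hdvd (j : ι) : (4 : ℤ) ∣ (∑ i, |a j i|) * ∑ k, |b j k| :=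
    mul_dvd_mul (even_sum_abs.2 (ha j)).two_dvd (even_sum_abs.2 (hb j)).two_dvd
  obtain ⟨n, hn⟩ := exists_tsum_intCast_eq_mul hdvd
  have hle : ∑ i, ∑ k, |∑' j, ((a j i * b j k : ℤ) : ℝ)| ≤
      ∑' j, ((∑ i, |a j i| : ℤ) : ℝ) * ((∑ k, |b j k| : ℤ) : ℝ) := by
    push_cast at hsum ⊢
    exact sum_norm_tsum_mul_le (f := fun j i => (a j i : ℝ)) (g := fun j k => (b j k : ℝ)) hsum
  simp only [Int.cast_mul, Int.cast_ofNat] at hn hm hle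
  rw [hn] at hle ⊢
  have hmn : (m : ℝ) < n := by linarith
  have hsucc : (m : ℝ) + 1 ≤ n := mod_cast Int.add_one_le_of_lt (mod_cast hmn)
  linarith

end

/-- If `(a_j)`, `(b_j)` are sequences in `ℤ³` with coordinates summing to zero,
with absolutely summable products of ℓ¹-norms, satisfying the six product identities
`Σ a_{j,i} b_{j,i} = 1` (i = 0,1,2) and `Σ a_{j,0}b_{j,1} = Σ a_{j,1}b_{j,2} = Σ a_{j,2}b_{j,0} = -1`,
then `Σ_j ‖a_j‖₁ ‖b_j‖₁ ≥ 8`. -/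
theorem statement6 (a b : ℕ → Fin 3 → ℤ)
    (ha : ∀ j, a j 0 + a j 1 + a j 2 = 0)
    (hb : ∀ j, b j 0 + b j 1 + b j 2 = 0)
    (hsum : Summable (fun j => ((∑ i : Fin 3, |a j i| : ℤ) : ℝ) * ((∑ i : Fin 3, |b j i| : ℤ) : ℝ)))
    (h00 : ∑' j : ℕ, ((a j 0 * b j 0 : ℤ) : ℝ) = 1)
    (h11 : ∑' j : ℕ, ((a j 1 * b j 1 : ℤ) : ℝ) = 1)
    (h22 : ∑' j : ℕ, ((a j 2 * b j 2 : ℤ) : ℝ) = 1)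
    (h01 : ∑' j : ℕ, ((a j 0 * b j 1 : ℤ) : ℝ) = -1)
    (h12 : ∑' j : ℕ, ((a j 1 * b j 2 : ℤ) : ℝ) = -1)
    (h20 : ∑' j : ℕ, ((a j 2 * b j 0 : ℤ) : ℝ) = -1) :
    8 ≤ ∑' j : ℕ, ((∑ i : Fin 3, |a j i| : ℤ) : ℝ) * ((∑ i : Fin 3, |b j i| : ℤ) : ℝ) := by
  have hentries : 4 * ((1 : ℤ) : ℝ) < ∑ i, ∑ k, |∑' j, ((a j i * b j k : ℤ) : ℝ)| := by
    simp only [Fin.sum_univ_three, h00, h11, h22, h01, h12, h20, abs_neg, abs_one, Int.cast_one]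
    linarith [abs_nonneg (∑' j, ((a j 0 * b j 2 : ℤ) : ℝ)),
      abs_nonneg (∑' j, ((a j 1 * b j 0 : ℤ) : ℝ)), abs_nonneg (∑' j, ((a j 2 * b j 1 : ℤ) : ℝ))]
  calc (8 : ℝ) = 4 * (((1 : ℤ) : ℝ) + 1) := by norm_num
    _ ≤ _ := statement6_general (by simp [Fin.sum_univ_three, ha])
      (by simp [Fin.sum_univ_three, hb]) hsum hentries
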